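/- Assume n = 2t with t ≥ 1, and let E be the fixed field of θ^t, so K ⊆ E ⊆ L and [L : E] = 2. Let γ ∈ L \ {0} with N_{L/K}(γ) ∉ {a² : a ∈ K \ {0}}. Let ℓ ≥ 1 and let α_1,…,α_ℓ ∈ L \ {0} have pairwise distinct norms, each norm N_{L/K}(α_j) being a square in K \ {0}. Let 1 ≤ k ≤ ℓn, f_0, f_k ∈ E and f_1,…,f_{k−1} ∈ L, not all zero, and set F_α(β) := Σ_{i=0}^{k−1} f_i·N_i(α)·θ^i(β) + γ·f_k·N_k(α)·θ^k(β). Then Σ_{j=1}^{ℓ} dim_K(ker F_{α_j}) ≤ k − 1. Hence the twisted linearized Reed–Solomon code of TZ-type D_k^θ(γ) := {(F_{α_1},…,F_{α_ℓ})}, an E-subspace of dimension 2k, has minimum sum-rank distance ℓn − k + 1, i.e. is a maximum sum-rank distance code. -/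

import Mathlib

/-!
The maps `β ↦ N_i(α) θ^i(β)` are the powers of the semilinear map `T_α : β ↦ α θ(β)`, so
`F_α` is the value at `T_α` of the skew polynomial `∑ c_i x^i ∈ L[x; θ]` with `c_i = f_i` for
`i < k` and `c_k = γ f_k`.

A nonzero `β₀` in the kernel at `α_{j₀}` gives a right linear factor `x - a`,
`a = α_{j₀} θ(β₀) / β₀` (`skewEval_div`). The map `T_{α_j} - a` has kernel `K β₀` for `j = j₀`, and
is injective for `j ≠ j₀`, since a nonzero kernel element forces `N(α_j) = N(a) = N(α_{j₀})`.
By induction on the degree the kernel dimensions add up to at most the degree `d`. In case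
of equality the polynomial splits completely, and comparing constant coefficients gives
`N(c_0) = N(c_d) ∏ N(a_i)`, the signs disappearing because `n` is even; the `N(a_i)` are squares
(`sum_finrank_ker_skewEval`).

If `f_k = 0`, the degree is at most `k - 1`. Otherwise equality with `k` would give
`N(f_0) = s² N(γ) N(f_k)`. As `f_0` and `f_k` lie in the fixed field of `θ^t`, their norms are
squares in `K` (`norm_eq_sq_of_fixed`), so `N(γ)` would be a square.
-/


noncomputable section

open Finset

variable {K L : Type*} [Field K] [Field L] [Algebra K L]

/-- The `i`-th truncated norm `N_i(y) = ∏_{j=0}^{i-1} θ^j(y)`. -/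
def trunorm (θ : L ≃ₐ[K] L) (i : ℕ) (y : L) : L :=
  ∏ j ∈ Finset.range i, (θ ^ j) y

/-- The TZ-type twisted map `F_α(β) = ∑_{i<k} f_i·N_i(α)·θ^i(β) + γ·f_k·N_k(α)·θ^k(β)`,
for each block `α_j`. -/
def PhiTZ (ℓ : ℕ) (θ : L ≃ₐ[K] L) (α : Fin ℓ → L) (k : ℕ) (γ : L) (f : ℕ → L) :
    Fin ℓ → L →ₗ[K] L :=
  fun j => (∑ i ∈ Finset.range k, (f i * trunorm θ i (α j)) • (θ ^ i).toLinearMap)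
    + (γ * f k * trunorm θ k (α j)) • (θ ^ k).toLinearMap

theorem trunorm_succ (θ : L ≃ₐ[K] L) (i : ℕ) (y : L) :
    trunorm θ (i + 1) y = trunorm θ i y * (θ ^ i) y := by
  simp [trunorm, Finset.prod_range_succ]

theorem trunorm_finrank_eq_norm [IsGalois K L] [FiniteDimensional K L] (θ : L ≃ₐ[K] L)
    (hgen : ∀ σ : L ≃ₐ[K] L, σ ∈ Subgroup.zpowers θ) (y : L) :
    trunorm θ (Module.finrank K L) y = algebraMap K L (Algebra.norm K y) := by
  classical
  have ho : orderOf θ = Module.finrank K L := by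
    rw [orderOf_eq_card_of_forall_mem_zpowers hgen, IsGalois.card_aut_eq_finrank]
  rw [Algebra.norm_eq_prod_automorphisms, ← IsCyclic.image_range_orderOf hgen,
    Finset.prod_image, ho, trunorm]
  intro i hi j hj hij
  simp only [Finset.coe_range, Set.mem_Iio] at hi hj
  exact pow_injOn_Iio_orderOf hi hj hij

theorem exists_algebraMap_eq_of_fixed [IsGalois K L] [FiniteDimensional K L] (θ : L ≃ₐ[K] L)
    (hgen : ∀ σ : L ≃ₐ[K] L, σ ∈ Subgroup.zpowers θ) (y : L) (hy : θ y = y) :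
    ∃ c : K, algebraMap K L c = y := by
  have h : y ∈ (⊥ : IntermediateField K L) := by
    rw [IsGalois.mem_bot_iff_fixed]
    intro σ
    have hle : Subgroup.zpowers θ ≤ MulAction.stabilizer (L ≃ₐ[K] L) y := by
      rw [Subgroup.zpowers_le]
      exact hy
    exact hle (hgen σ)
  exact IntermediateField.mem_bot.mp h

/-- For `x` in the fixed field `E` of `θ^t`, where `[L : K] = 2t`, one has
`N_{L/K}(x) = N_t(x)²`, and `N_t(x) = N_{E/K}(x)` is fixed by `θ`. -/
theorem norm_eq_sq_of_fixed [IsGalois K L] [FiniteDimensional K L] (θ : L ≃ₐ[K] L)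
    (hgen : ∀ σ : L ≃ₐ[K] L, σ ∈ Subgroup.zpowers θ) (t : ℕ)
    (hn : Module.finrank K L = 2 * t) (x : L) (hx : (θ ^ t) x = x) :
    ∃ e : K, Algebra.norm K x = e ^ 2 := by
  have hfix : θ (trunorm θ t x) = trunorm θ t x := by
    by_cases h0 : x = 0
    · subst h0
      unfold trunorm
      rw [map_prod]
      simp
    have h1 := Finset.prod_range_succ (fun j => (θ ^ j) x) t
    have h2 := Finset.prod_range_succ' (fun j => (θ ^ j) x) t
    rw [h1] at h2
    simp only [hx, pow_zero, AlgEquiv.one_apply] at h2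
    have h3 := mul_right_cancel₀ h0 h2
    unfold trunorm
    rw [map_prod, h3]
    exact Finset.prod_congr rfl fun j _ => by rw [pow_succ', AlgEquiv.mul_apply]
  obtain ⟨e, he⟩ := exists_algebraMap_eq_of_fixed θ hgen _ hfix
  refine ⟨e, (algebraMap K L).injective ?_⟩
  rw [← trunorm_finrank_eq_norm θ hgen, hn, map_pow, he, sq, two_mul]
  unfold trunorm
  rw [Finset.prod_range_add]
  congr 1
  refine Finset.prod_congr rfl fun j _ => ?_
  rw [add_comm, pow_add, AlgEquiv.mul_apply, hx]

/-- The value at `T_α : β ↦ α θ(β)` of the skew polynomial `∑_{i ≤ d} c_i x^i ∈ L[x; θ]`. -/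
def skewEval (θ : L ≃ₐ[K] L) (c : ℕ → L) (d : ℕ) (α : L) : L →ₗ[K] L :=
  ∑ i ∈ Finset.range (d + 1), (c i * trunorm θ i α) • (θ ^ i).toLinearMap

/-- The value at `T_α` of the linear skew polynomial `x - a`. -/
def skewLin (θ : L ≃ₐ[K] L) (a α : L) : L →ₗ[K] L :=
  α • θ.toLinearMap - a • LinearMap.id

theorem skewEval_apply (θ : L ≃ₐ[K] L) (c : ℕ → L) (d : ℕ) (α β : L) :
    skewEval θ c d α β = ∑ i ∈ Finset.range (d + 1), c i * trunorm θ i α * (θ ^ i) β := by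
  simp [skewEval, LinearMap.sum_apply]

theorem skewLin_apply (θ : L ≃ₐ[K] L) (a α β : L) :
    skewLin θ a α β = α * θ β - a * β := by
  simp [skewLin]

theorem skewEval_succ_apply (θ : L ≃ₐ[K] L) (c : ℕ → L) (d : ℕ) (α β : L) :
    skewEval θ c (d + 1) α β =
      skewEval θ c d α β + c (d + 1) * trunorm θ (d + 1) α * (θ ^ (d + 1)) β := by
  rw [skewEval_apply, skewEval_apply, Finset.sum_range_succ]

theorem skewEval_congr (θ : L ≃ₐ[K] L) (c c' : ℕ → L) (d : ℕ) (h : ∀ i ≤ d, c i = c' i) (α : L) :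
    skewEval θ c d α = skewEval θ c' d α := by
  unfold skewEval
  refine Finset.sum_congr rfl fun i hi => ?_
  rw [h i (Nat.lt_succ_iff.mp (Finset.mem_range.mp hi))]

/-- Right division with remainder by `x - a`. The quotient `q` and the remainder `r` do not depend
on the point `α` of evaluation. -/
theorem skewEval_div (θ : L ≃ₐ[K] L) (a : L) (d : ℕ) : ∀ c : ℕ → L, ∃ (q : ℕ → L) (r : L),
    (∀ α β, skewEval θ c (d + 1) α β = skewEval θ q d α (skewLin θ a α β) + r * β) ∧
      q d = c (d + 1) ∧ r = c 0 + q 0 * a := by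
  induction d with
  | zero =>
    intro c
    refine ⟨fun _ => c 1, c 0 + c 1 * a, fun α β => ?_, rfl, rfl⟩
    simp [skewEval_apply, skewLin_apply, Finset.sum_range_succ, trunorm]
    ring
  | succ d ih =>
    intro c
    -- `c_{d+2} x^{d+2} = c_{d+2} x^{d+1} (x - a) + c_{d+2} θ^{d+1}(a) x^{d+1}`
    obtain ⟨q, r, h, -, hr⟩ := ih (Function.update c (d + 1)
      (c (d + 1) + c (d + 2) * (θ ^ (d + 1)) a))
    refine ⟨Function.update q (d + 1) (c (d + 2)), r, fun α β => ?_, by simp, ?_⟩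
    · have h' := h α β
      rw [skewEval_succ_apply, skewEval_congr θ _ c d (fun i hi => by
        rw [Function.update_of_ne (by omega)])] at h'
      rw [Function.update_self] at h'
      rw [skewEval_succ_apply, skewEval_succ_apply,
        skewEval_succ_apply, skewEval_congr θ (Function.update q _ _) q d (fun i hi => by
        rw [Function.update_of_ne (by omega)]), Function.update_self]
      have e1 : (θ ^ (d + 1)) (skewLin θ a α β) =
          (θ ^ (d + 1)) α * (θ ^ (d + 2)) β - (θ ^ (d + 1)) a * (θ ^ (d + 1)) β := by
        rw [skewLin_apply, map_sub, map_mul, map_mul, pow_succ θ (d + 1), AlgEquiv.mul_apply]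
      rw [e1, trunorm_succ θ (d + 1)]
      linear_combination h'
    · rw [hr, Function.update_of_ne (by omega), Function.update_of_ne (by omega)]

theorem finrank_ker_comp_le_add [FiniteDimensional K L] (Q S : L →ₗ[K] L) :
    Module.finrank K (LinearMap.ker (Q ∘ₗ S)) ≤
      Module.finrank K (LinearMap.ker Q) + Module.finrank K (LinearMap.ker S) := by
  have hmem : ∀ x : LinearMap.ker (Q ∘ₗ S), (S ∘ₗ (LinearMap.ker (Q ∘ₗ S)).subtype) x ∈
      LinearMap.ker Q := fun x => x.2
  set g := LinearMap.codRestrict (LinearMap.ker Q) _ hmem with hg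
  rw [← LinearMap.finrank_range_add_finrank_ker g]
  refine add_le_add (Submodule.finrank_le _) ?_
  have hk : ∀ x : LinearMap.ker g, ((LinearMap.ker (Q ∘ₗ S)).subtype ∘ₗ (LinearMap.ker g).subtype) x
      ∈ LinearMap.ker S := fun x => congrArg Subtype.val x.2
  refine LinearMap.finrank_le_finrank_of_injective
    (f := LinearMap.codRestrict (LinearMap.ker S) _ hk) ?_
  intro x y hxy
  have hval : (x : LinearMap.ker (Q ∘ₗ S)).1 = (y : LinearMap.ker (Q ∘ₗ S)).1 :=
    congrArg (fun z : LinearMap.ker S => (z : L)) hxy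
  exact Subtype.ext (Subtype.ext hval)

/-- Two nonzero solutions of `α θ(β) = a β` differ by a factor fixed by `θ`, that is, by a scalar
in `K`. -/
theorem finrank_ker_skewLin_le_one [IsGalois K L] [FiniteDimensional K L] (θ : L ≃ₐ[K] L)
    (hgen : ∀ σ : L ≃ₐ[K] L, σ ∈ Subgroup.zpowers θ) (a α β₀ : L) (hα : α ≠ 0) (hβ : β₀ ≠ 0)
    (h : α * θ β₀ = a * β₀) : Module.finrank K (LinearMap.ker (skewLin θ a α)) ≤ 1 := by
  have hm : β₀ ∈ LinearMap.ker (skewLin θ a α) := by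
    rw [LinearMap.mem_ker, skewLin_apply, h, sub_self]
  refine finrank_le_one ⟨β₀, hm⟩ fun w => ?_
  have hw : α * θ w.1 = a * w.1 := by
    have := w.2
    rwa [LinearMap.mem_ker, skewLin_apply, sub_eq_zero] at this
  have hθ : θ β₀ ≠ 0 := by simpa using hβ
  obtain ⟨c, hc⟩ := exists_algebraMap_eq_of_fixed θ hgen (w.1 / β₀) (by
    rw [map_div₀, div_eq_div_iff hθ hβ]
    apply mul_left_cancel₀ hα
    linear_combination β₀ * hw - w.1 * h)
  refine ⟨c, Subtype.ext ?_⟩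
  rw [Submodule.coe_smul, Algebra.smul_def, hc]
  field_simp

theorem norm_eq_of_mul_apply_eq (θ : L ≃ₐ[K] L) [FiniteDimensional K L]
    (a α β : L) (hβ : β ≠ 0) (h : α * θ β = a * β) : Algebra.norm K a = Algebra.norm K α := by
  have h1 := congrArg (Algebra.norm K) h
  rw [map_mul, map_mul, Algebra.norm_eq_of_algEquiv] at h1
  exact (mul_right_cancel₀ (Algebra.norm_ne_zero_iff.mpr hβ) h1).symm

/-- A skew polynomial of degree `d` has kernel dimensions adding up to at most `d` at points of
pairwise distinct norms; when these norms are squares and the bound is attained, the norms of the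
constant and the leading coefficient agree up to a nonzero square. -/
theorem sum_finrank_ker_skewEval [IsGalois K L] [FiniteDimensional K L] (θ : L ≃ₐ[K] L)
    (hgen : ∀ σ : L ≃ₐ[K] L, σ ∈ Subgroup.zpowers θ) (heven : Even (Module.finrank K L))
    {ℓ : ℕ} (α : Fin ℓ → L) (hα0 : ∀ j, α j ≠ 0)
    (hdist : Function.Injective fun j => Algebra.norm K (α j))
    (hsq : ∀ j, ∃ a : K, a ≠ 0 ∧ Algebra.norm K (α j) = a ^ 2) (d : ℕ) :
    ∀ c : ℕ → L, c d ≠ 0 →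
      ∑ j, Module.finrank K (LinearMap.ker (skewEval θ c d (α j))) ≤ d ∧
      (∑ j, Module.finrank K (LinearMap.ker (skewEval θ c d (α j))) = d →
        ∃ s : K, s ≠ 0 ∧ Algebra.norm K (c 0) = s ^ 2 * Algebra.norm K (c d)) := by
  induction d with
  | zero =>
    intro c hc
    refine ⟨?_, fun _ => ⟨1, one_ne_zero, by simp⟩⟩
    rw [Nat.le_zero, Finset.sum_eq_zero]
    intro j _
    rw [Submodule.finrank_eq_zero, LinearMap.ker_eq_bot']
    intro β hβ
    simpa [skewEval_apply, trunorm, hc] using hβ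
  | succ d ih =>
    intro c hc
    by_cases hz : ∀ j, LinearMap.ker (skewEval θ c (d + 1) (α j)) = ⊥
    · rw [Finset.sum_eq_zero fun j _ => by rw [hz j, finrank_bot]]
      exact ⟨Nat.zero_le _, fun h => absurd h (Nat.succ_ne_zero d).symm⟩
    push Not at hz
    obtain ⟨j₀, hj₀⟩ := hz
    obtain ⟨β₀, hmem, hβ₀⟩ := Submodule.exists_mem_ne_zero_of_ne_bot hj₀
    set a := α j₀ * θ β₀ / β₀ with ha
    have hroot : α j₀ * θ β₀ = a * β₀ := by rw [ha]; field_simp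
    have hNa := norm_eq_of_mul_apply_eq θ a (α j₀) β₀ hβ₀ hroot
    obtain ⟨q, r, hdiv, hqd, hr⟩ := skewEval_div θ a d c
    have hr0 : r = 0 := by
      have h1 := hdiv (α j₀) β₀
      rw [LinearMap.mem_ker.mp hmem, skewLin_apply, hroot, sub_self, map_zero, zero_add] at h1
      exact (mul_eq_zero.mp h1.symm).resolve_right hβ₀
    have hcomp : ∀ j, skewEval θ c (d + 1) (α j) =
        skewEval θ q d (α j) ∘ₗ skewLin θ a (α j) := by
      intro j
      ext β
      rw [hdiv, hr0, zero_mul, add_zero, LinearMap.comp_apply]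
    have hlin : ∀ j, Module.finrank K (LinearMap.ker (skewLin θ a (α j))) ≤
        if j = j₀ then 1 else 0 := by
      intro j
      split_ifs with hj
      · subst hj
        exact finrank_ker_skewLin_le_one θ hgen a _ β₀ (hα0 _) hβ₀ hroot
      · rw [Nat.le_zero, Submodule.finrank_eq_zero, LinearMap.ker_eq_bot']
        intro β hβ
        by_contra hne
        rw [skewLin_apply, sub_eq_zero] at hβ
        exact hj (hdist ((norm_eq_of_mul_apply_eq θ a (α j) β hne hβ).symm.trans hNa))
    have hsum : ∑ j, Module.finrank K (LinearMap.ker (skewEval θ c (d + 1) (α j))) ≤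
        ∑ j, Module.finrank K (LinearMap.ker (skewEval θ q d (α j))) + 1 := by
      calc _ ≤ ∑ j, (Module.finrank K (LinearMap.ker (skewEval θ q d (α j))) +
              if j = j₀ then 1 else 0) := by
            refine Finset.sum_le_sum fun j _ => ?_
            rw [hcomp]
            exact (finrank_ker_comp_le_add _ _).trans (Nat.add_le_add_left (hlin j) _)
        _ = _ := by rw [Finset.sum_add_distrib]; simp
    obtain ⟨ih1, ih2⟩ := ih q (by rwa [hqd])
    refine ⟨by omega, fun heq => ?_⟩
    obtain ⟨s, hs, hsN⟩ := ih2 (by omega)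
    obtain ⟨b, hb, hbN⟩ := hsq j₀
    refine ⟨s * b, mul_ne_zero hs hb, ?_⟩
    have hc0 : c 0 = algebraMap K L (-1) * (q 0 * a) := by
      rw [map_neg, map_one]
      linear_combination hr0 - hr
    rw [hc0, map_mul, map_mul, Algebra.norm_algebraMap, heven.neg_one_pow, hsN, hNa, hbN, hqd]
    ring

theorem stmt_17 (n t ℓ : ℕ) [IsGalois K L] [FiniteDimensional K L]
    (hn : Module.finrank K L = n) (θ : L ≃ₐ[K] L)
    (hgen : ∀ σ : L ≃ₐ[K] L, σ ∈ Subgroup.zpowers θ)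
    (ht : 1 ≤ t) (hnt : n = 2 * t) (hl : 1 ≤ ℓ)
    (γ : L) (hγ0 : γ ≠ 0)
    -- `N_{L/K}(γ)` is a nonsquare:
    (hγ : ∀ a : K, a ≠ 0 → trunorm θ n γ ≠ algebraMap K L (a ^ 2))
    (α : Fin ℓ → L) (hα0 : ∀ j, α j ≠ 0)
    (hdist : Function.Injective fun j => trunorm θ n (α j))
    -- each `N_{L/K}(α_j)` is a nonzero square in `K`:
    (hsq : ∀ j, ∃ a : K, a ≠ 0 ∧ trunorm θ n (α j) = algebraMap K L (a ^ 2))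
    (k : ℕ) (hk1 : 1 ≤ k) (hk : k ≤ ℓ * n)
    (f : ℕ → L)
    -- `f_0, f_k` lie in the fixed field `E` of `θ^t`:
    (hf0 : (θ ^ t) (f 0) = f 0) (hfk : (θ ^ t) (f k) = f k)
    -- `f_0, …, f_k` are not all zero:
    (hne : ∃ i, i ≤ k ∧ f i ≠ 0) :
    ∑ j : Fin ℓ, Module.finrank K ↥(LinearMap.ker (PhiTZ ℓ θ α k γ f j)) ≤ k - 1 ∧
      ℓ * n - k + 1
        ≤ ∑ j : Fin ℓ,
            (n - Module.finrank K ↥(LinearMap.ker (PhiTZ ℓ θ α k γ f j))) := by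
  have hNorm : ∀ y, trunorm θ n y = algebraMap K L (Algebra.norm K y) := fun y => by
    rw [← hn, trunorm_finrank_eq_norm θ hgen]
  have hinj := (algebraMap K L).injective
  have heven : Even (Module.finrank K L) := by
    rw [hn, hnt]
    exact even_two_mul t
  have hdist' : Function.Injective fun j => Algebra.norm K (α j) := by
    intro i j hij
    apply hdist
    simp only [hNorm]
    exact congrArg _ hij
  have hsq' : ∀ j, ∃ a : K, a ≠ 0 ∧ Algebra.norm K (α j) = a ^ 2 := by
    intro j
    obtain ⟨a, ha, h⟩ := hsq j
    exact ⟨a, ha, hinj (by rw [← hNorm, h])⟩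
  have main := sum_finrank_ker_skewEval θ hgen heven α hα0 hdist' hsq'
  set c : ℕ → L := Function.update f k (γ * f k) with hc
  have hck : c k = γ * f k := by rw [hc, Function.update_self]
  have hci : ∀ i, i ≠ k → c i = f i := fun i hi => by rw [hc, Function.update_of_ne hi]
  have hPhi : ∀ j, PhiTZ ℓ θ α k γ f j = skewEval θ c k (α j) := by
    intro j
    unfold PhiTZ skewEval
    rw [Finset.sum_range_succ, hck]
    congr 1
    refine Finset.sum_congr rfl fun i hi => ?_
    rw [hci i (Finset.mem_range.mp hi).ne]
  have key : ∑ j : Fin ℓ, Module.finrank K (LinearMap.ker (PhiTZ ℓ θ α k γ f j)) ≤ k - 1 := by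
    rw [Finset.sum_congr rfl fun j _ => by rw [hPhi j]]
    by_cases hk0 : f k = 0
    · -- the degree `d` of the skew polynomial is less than `k`
      classical
      have hne' : ∃ i, i ≤ k ∧ c i ≠ 0 := by
        obtain ⟨i, hi, hfi⟩ := hne
        refine ⟨i, hi, ?_⟩
        rwa [hci i (fun h => hfi (h ▸ hk0))]
      obtain ⟨i, hi, hfi⟩ := hne'
      set d := Nat.findGreatest (fun i => c i ≠ 0) k with hd
      have hcd : c d ≠ 0 := Nat.findGreatest_spec (P := fun i => c i ≠ 0) hi hfi
      have hdk : d ≤ k := Nat.findGreatest_le k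
      have hdk' : d ≠ k := by
        intro h
        rw [h, hck, hk0, mul_zero] at hcd
        exact hcd rfl
      have htrunc : ∀ x, skewEval θ c k x = skewEval θ c d x := by
        intro x
        unfold skewEval
        symm
        apply Finset.sum_subset
        · exact Finset.range_mono (by omega)
        · intro m hm hm'
          rw [Finset.mem_range] at hm hm'
          have : c m = 0 := by
            by_contra hne0
            have := Nat.le_findGreatest (P := fun i => c i ≠ 0) (Nat.lt_succ_iff.mp hm) hne0
            omega
          rw [this, zero_mul, zero_smul]
      rw [Finset.sum_congr rfl fun j _ => by rw [htrunc (α j)]]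
      have := (main d c hcd).1
      omega
    · obtain ⟨h1, h2⟩ := main k c (by rw [hck]; exact mul_ne_zero hγ0 hk0)
      rcases h1.lt_or_eq with h | h
      · omega
      exfalso
      obtain ⟨s, hs, hsN⟩ := h2 h
      rw [hck, hci 0 (by omega), map_mul] at hsN
      obtain ⟨e₀, he₀⟩ := norm_eq_sq_of_fixed θ hgen t (hn.trans hnt) _ hf0
      obtain ⟨e₁, he₁⟩ := norm_eq_sq_of_fixed θ hgen t (hn.trans hnt) _ hfk
      have hNk : Algebra.norm K (f k) ≠ 0 := Algebra.norm_ne_zero_iff.mpr hk0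
      have hNγ : Algebra.norm K γ ≠ 0 := Algebra.norm_ne_zero_iff.mpr hγ0
      have he₁0 : e₁ ≠ 0 := by
        rintro rfl
        exact hNk (by rw [he₁]; ring)
      have hval : Algebra.norm K γ = (e₀ / (s * e₁)) ^ 2 := by
        rw [he₀, he₁] at hsN
        field_simp
        linear_combination -hsN
      refine hγ (e₀ / (s * e₁)) ?_ (by rw [hNorm, hval])
      intro h0
      rw [h0] at hval
      exact hNγ (by rw [hval]; ring)
  refine ⟨key, ?_⟩
  have hle : ∀ j, Module.finrank K (LinearMap.ker (PhiTZ ℓ θ α k γ f j)) ≤ n := fun j =>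
    hn ▸ Submodule.finrank_le _
  have hsub : ∑ j : Fin ℓ, (n - Module.finrank K (LinearMap.ker (PhiTZ ℓ θ α k γ f j))) +
      ∑ j : Fin ℓ, Module.finrank K (LinearMap.ker (PhiTZ ℓ θ α k γ f j)) = ℓ * n := by
    rw [← Finset.sum_add_distrib, Finset.sum_congr rfl fun j _ => Nat.sub_add_cancel (hle j)]
    simp
  omega
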